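/- arXiv:1901.03361 — 8 statements merged into one kernel-verified Lean document; each statement's English description precedes it below -/
import Mathlib

section
/- A finite lattice C of languages over a finite alphabet A is quotient-closed if and only if its canonical preorder ≤_C is compatible with word concatenation: for all words u, v, u', v', if u ≤_C u' and v ≤_C v' then uv ≤_C u'v'. -/
open Set

namespace Paper

abbrev Lang (A : Type) := Set (List A)
abbrev LClass (A : Type) := Set (Set (List A))

variable {A R M : Type}

/-- A lattice of languages: contains `∅` and `A*`, closed under finite union
and finite intersection. -/
def LangLattice (𝒞 : LClass A) : Prop :=
  (∅ : Lang A) ∈ 𝒞 ∧ (Set.univ : Lang A) ∈ 𝒞 ∧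
    (∀ K L : Lang A, K ∈ 𝒞 → L ∈ 𝒞 → K ∪ L ∈ 𝒞) ∧
    (∀ K L : Lang A, K ∈ 𝒞 → L ∈ 𝒞 → K ∩ L ∈ 𝒞)

/-- A Boolean algebra of languages: a lattice closed under complement. -/
def LangBoolAlg (𝒞 : LClass A) : Prop :=
  LangLattice 𝒞 ∧ ∀ L : Lang A, L ∈ 𝒞 → Lᶜ ∈ 𝒞

/-- A class is quotient-closed when it is closed under left and right quotients
by words. -/
def QuotientClosed (𝒞 : LClass A) : Prop :=
  ∀ L ∈ 𝒞, ∀ w : List A,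
    {u : List A | w ++ u ∈ L} ∈ 𝒞 ∧ {u : List A | u ++ w ∈ L} ∈ 𝒞

/-- The canonical preorder `≤_𝒞` associated with a class `𝒞`. -/
def cle (𝒞 : LClass A) (w w' : List A) : Prop := ∀ L ∈ 𝒞, w ∈ L → w' ∈ L

/-- The canonical equivalence `∼_𝒞` associated with a class `𝒞`. -/
def ceq (𝒞 : LClass A) (w w' : List A) : Prop := ∀ L ∈ 𝒞, (w ∈ L ↔ w' ∈ L)

/-- The `∼_𝒞`-class of the word `w`. -/
def cclass (𝒞 : LClass A) (w : List A) : Lang A := {v | ceq 𝒞 w v}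

/-- `D` is a `∼_𝒞`-class. -/
def IsCClass (𝒞 : LClass A) (D : Lang A) : Prop := ∃ w : List A, D = cclass 𝒞 w

/-- Multiplication of `∼_𝒞`-classes (the class of the concatenation of
representatives). -/
def cmul (𝒞 : LClass A) (D E : Lang A) : Lang A :=
  {x | ∃ u ∈ D, ∃ v ∈ E, ceq 𝒞 (u ++ v) x}

/-- Language concatenation. -/
def cat (K L : Lang A) : Lang A := {w | ∃ u ∈ K, ∃ v ∈ L, u ++ v = w}

/-- Marked concatenation `K a L`. -/
def mcat (K : Lang A) (a : A) (L : Lang A) : Lang A :=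
  {w | ∃ u ∈ K, ∃ v ∈ L, u ++ a :: v = w}

/-- Boolean closure: the least Boolean algebra containing `𝒞`. -/
def BoolC (𝒞 : LClass A) : LClass A := ⋂₀ {𝒟 : LClass A | LangBoolAlg 𝒟 ∧ 𝒞 ⊆ 𝒟}

/-- Polynomial closure: the least class containing `𝒞` closed under union and
marked concatenation. -/
def PolC (𝒞 : LClass A) : LClass A :=
  ⋂₀ {𝒟 : LClass A | 𝒞 ⊆ 𝒟 ∧
    (∀ K L : Lang A, K ∈ 𝒟 → L ∈ 𝒟 → K ∪ L ∈ 𝒟) ∧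
    (∀ (K L : Lang A) (a : A), K ∈ 𝒟 → L ∈ 𝒟 → mcat K a L ∈ 𝒟)}

/-- A cover of `L`: a finite set of languages whose union includes `L`. -/
def IsCover (Ks : LClass A) (L : Lang A) : Prop := Ks.Finite ∧ L ⊆ ⋃₀ Ks

/-- A `𝒞`-cover of `L`: a cover all of whose members belong to `𝒞`. -/
def IsCCover (𝒞 Ks : LClass A) (L : Lang A) : Prop := IsCover Ks L ∧ Ks ⊆ 𝒞

/-- `α : A* → M` is a monoid morphism. -/
def IsMonoidMorphism [Monoid M] (α : List A → M) : Prop :=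
  α [] = 1 ∧ ∀ u v : List A, α (u ++ v) = α u * α v

/-- `α` recognizes `L`. -/
def Recognizes [Monoid M] (α : List A → M) (L : Lang A) : Prop :=
  ∃ F : Set M, L = α ⁻¹' F

/-- A language is regular when it is recognized by a monoid morphism into a
finite monoid. -/
def RegularLang (L : Lang A) : Prop :=
  ∃ (N : Type) (_ : Monoid N) (_ : Finite N) (α : List A → N),
    IsMonoidMorphism α ∧ Recognizes α L

/-- The canonical order on a rating set: `r ≤ s` iff `r + s = s`. -/
def rle [Add R] (r s : R) : Prop := r + s = s

/-- A rating map: maps `∅` to `0` and commutes with binary union. -/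
def IsRatingMap [AddCommMonoid R] (ρ : Lang A → R) : Prop :=
  ρ ∅ = 0 ∧ ∀ K L : Lang A, ρ (K ∪ L) = ρ K + ρ L

/-- A nice rating map: the value of any language is a finite sum of values of
its words. -/
def IsNice [AddCommMonoid R] (ρ : Lang A → R) : Prop :=
  ∀ K : Lang A, ∃ l : List (List A), (∀ w ∈ l, w ∈ K) ∧
    ρ K = (l.map fun w => ρ {w}).sum

/-- A multiplicative rating map: also a morphism for concatenation. -/
def IsMultiplicative [Semiring R] (ρ : Lang A → R) : Prop :=
  ρ ({[]} : Lang A) = 1 ∧ ∀ K L : Lang A, ρ (cat K L) = ρ K * ρ L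

/-- An endomorphism of the additive monoid `(R, +)`. -/
def IsAddEndo [AddCommMonoid R] (γ : R → R) : Prop :=
  γ 0 = 0 ∧ ∀ r s : R, γ (r + s) = γ r + γ s

/-- A quasi-multiplicative rating map for the endomorphism `γ`. -/
def IsQuasiMult [Semiring R] (ρ : Lang A → R) (γ : R → R) : Prop :=
  IsAddEndo γ ∧ (∀ q r s : R, γ (q * γ r * s) = γ (q * r * s)) ∧
    ∀ K L : Lang A, ρ (cat K L) = γ (ρ K * ρ L)

/-- The `ρ`-imprint of a set of languages. -/
def imprint [Add R] (ρ : Lang A → R) (Ks : LClass A) : Set R :=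
  {r | ∃ K ∈ Ks, rle r (ρ K)}

/-- The `𝒟`-optimal `ρ`-imprint on `L` (the imprint of any optimal `𝒟`-cover
of `L`, i.e. the intersection of the imprints of all `𝒟`-covers of `L`). -/
def optImprint [Add R] (𝒟 : LClass A) (ρ : Lang A → R) (L : Lang A) : Set R :=
  {r | ∀ Ks : LClass A, IsCCover 𝒟 Ks L → r ∈ imprint ρ Ks}

/-- Downset operation on subsets of a rating set. -/
def dclos [Add R] (U : Set R) : Set R := {r | ∃ s ∈ U, rle r s}

/-- Pointwise multiplication of subsets of a rating set. -/
def smul [Mul R] (U V : Set R) : Set R := {x | ∃ u ∈ U, ∃ v ∈ V, u * v = x}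

theorem sUnion_mem_aux {A : Type} (𝒞 : LClass A) (hlat : LangLattice 𝒞)
    (S : LClass A) (hS : S.Finite) (h : S ⊆ 𝒞) : ⋃₀ S ∈ 𝒞 := by
  induction S, hS using Set.Finite.induction_on with
  | empty => rw [Set.sUnion_empty]; exact hlat.1
  | insert _ _ ih =>
    rw [Set.sUnion_insert]
    exact hlat.2.2.1 _ _ (h (Set.mem_insert _ _)) (ih fun x hx => h (Set.mem_insert_of_mem _ hx))

theorem sInter_mem_aux {A : Type} (𝒞 : LClass A) (hlat : LangLattice 𝒞)
    (S : LClass A) (hS : S.Finite) (h : S ⊆ 𝒞) : ⋂₀ S ∈ 𝒞 := by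
  induction S, hS using Set.Finite.induction_on with
  | empty => rw [Set.sInter_empty]; exact hlat.2.1
  | insert _ _ ih =>
    rw [Set.sInter_insert]
    exact hlat.2.2.2 _ _ (h (Set.mem_insert _ _)) (ih fun x hx => h (Set.mem_insert_of_mem _ hx))

theorem upset_mem_aux {A : Type} (𝒞 : LClass A) (hfin : 𝒞.Finite) (hlat : LangLattice 𝒞)
    (X : Set (List A)) (hX : ∀ w w', cle 𝒞 w w' → w ∈ X → w' ∈ X) : X ∈ 𝒞 := by
  have e : X = ⋃₀ {L | L ∈ 𝒞 ∧ L ⊆ X} := by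
    apply Set.Subset.antisymm
    · intro w hw
      refine ⟨⋂₀ {L | L ∈ 𝒞 ∧ w ∈ L}, ⟨?_, ?_⟩, fun L hL => hL.2⟩
      · exact sInter_mem_aux 𝒞 hlat _ (hfin.subset fun L hL => hL.1) fun L hL => hL.1
      · intro w' hw'
        exact hX w w' (fun L hL hwL => hw' L ⟨hL, hwL⟩) hw
    · exact Set.sUnion_subset fun L hL => hL.2
  rw [e]
  exact sUnion_mem_aux 𝒞 hlat _ (hfin.subset fun L hL => hL.1) fun L hL => hL.1

/-- A finite lattice `𝒞` is quotient-closed iff its canonical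
preorder `≤_𝒞` is compatible with word concatenation. -/
theorem statement3 {A : Type} [Fintype A] (𝒞 : LClass A) (hfin : 𝒞.Finite)
    (hlat : LangLattice 𝒞) :
    QuotientClosed 𝒞 ↔
      ∀ u v u' v' : List A, cle 𝒞 u u' → cle 𝒞 v v' →
        cle 𝒞 (u ++ v) (u' ++ v') := by
  constructor
  · intro hq u v u' v' hu hv L hL h
    have h1 : u' ++ v ∈ L := hu _ (hq L hL v).2 h
    exact hv _ (hq L hL u').1 h1
  · intro hc L hL w
    constructor
    · apply upset_mem_aux 𝒞 hfin hlat
      intro x y hxy hx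
      exact hc w x w y (fun _ _ h => h) hxy L hL hx
    · apply upset_mem_aux 𝒞 hfin hlat
      intro x y hxy hx
      exact hc x w y w hxy (fun _ _ h => h) L hL hx

end Paper
end

section
/- Let C be a quotient-closed lattice whose members are all regular languages over a finite alphabet A. Then the polynomial closure Pol(C) is a quotient-closed lattice which is closed under concatenation (K, L ∈ Pol(C) implies KL ∈ Pol(C)) and under marked concatenation (K, L ∈ Pol(C) and a ∈ A implies KaL ∈ Pol(C)). -/
open Set

namespace Paper

variable {A R M : Type}

lemma polC_base {𝒞 : LClass A} {L : Lang A} (h : L ∈ 𝒞) : L ∈ PolC 𝒞 :=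
  fun _ h𝒟 => h𝒟.1 h

lemma polC_union {𝒞 : LClass A} {K L : Lang A} (hK : K ∈ PolC 𝒞) (hL : L ∈ PolC 𝒞) :
    K ∪ L ∈ PolC 𝒞 :=
  fun 𝒟 h𝒟 => h𝒟.2.1 K L (hK 𝒟 h𝒟) (hL 𝒟 h𝒟)

lemma polC_mcat {𝒞 : LClass A} {K L : Lang A} (a : A) (hK : K ∈ PolC 𝒞) (hL : L ∈ PolC 𝒞) :
    mcat K a L ∈ PolC 𝒞 :=
  fun 𝒟 h𝒟 => h𝒟.2.2 K L a (hK 𝒟 h𝒟) (hL 𝒟 h𝒟)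

lemma polC_ind {𝒞 : LClass A} {P : Lang A → Prop} (h0 : ∀ L ∈ 𝒞, P L)
    (h1 : ∀ K L, K ∈ PolC 𝒞 → L ∈ PolC 𝒞 → P K → P L → P (K ∪ L))
    (h2 : ∀ K L a, K ∈ PolC 𝒞 → L ∈ PolC 𝒞 → P K → P L → P (mcat K a L))
    {L : Lang A} (hL : L ∈ PolC 𝒞) : P L :=
  (hL {L | L ∈ PolC 𝒞 ∧ P L}
    ⟨fun L h => ⟨polC_base h, h0 L h⟩,
     fun K L hK hL => ⟨polC_union hK.1 hL.1, h1 K L hK.1 hL.1 hK.2 hL.2⟩,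
     fun K L a hK hL => ⟨polC_mcat a hK.1 hL.1, h2 K L a hK.1 hL.1 hK.2 hL.2⟩⟩).2

lemma fin_sUnion {𝒟 : LClass A} (h0 : (∅ : Lang A) ∈ 𝒟)
    (hu : ∀ K L : Lang A, K ∈ 𝒟 → L ∈ 𝒟 → K ∪ L ∈ 𝒟) {S : LClass A} (hS : S.Finite)
    (h : ∀ L ∈ S, L ∈ 𝒟) : ⋃₀ S ∈ 𝒟 := by
  induction S, hS using Set.Finite.induction_on with
  | empty => simpa using h0
  | insert _ _ ih =>
    rw [sUnion_insert]
    exact hu _ _ (h _ (mem_insert _ _)) (ih fun L hL => h L (mem_insert_of_mem _ hL))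

lemma fin_sInter {𝒟 : LClass A} (h0 : (Set.univ : Lang A) ∈ 𝒟)
    (hu : ∀ K L : Lang A, K ∈ 𝒟 → L ∈ 𝒟 → K ∩ L ∈ 𝒟) {S : LClass A} (hS : S.Finite)
    (h : ∀ L ∈ S, L ∈ 𝒟) : ⋂₀ S ∈ 𝒟 := by
  induction S, hS using Set.Finite.induction_on with
  | empty => simpa using h0
  | insert _ _ ih =>
    rw [sInter_insert]
    exact hu _ _ (h _ (mem_insert _ _)) (ih fun L hL => h L (mem_insert_of_mem _ hL))

/-- The set of factorizations of words of `L` is a finite union of rectangles of `𝒟`. -/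
def Split (𝒟 : LClass A) (L : Lang A) : Prop :=
  ∃ S : Set (Lang A × Lang A), S.Finite ∧ (∀ p ∈ S, p.1 ∈ 𝒟 ∧ p.2 ∈ 𝒟) ∧
    ∀ u v : List A, u ++ v ∈ L ↔ ∃ p ∈ S, u ∈ p.1 ∧ v ∈ p.2

lemma split_base {𝒞 : LClass A} (hlat : LangLattice 𝒞) (hqc : QuotientClosed 𝒞)
    {L : Lang A} (hL : L ∈ 𝒞) (hreg : RegularLang L) : Split 𝒞 L := by
  obtain ⟨N, _, _, α, hα, F, hF⟩ := hreg
  have hm : ∀ w, w ∈ L ↔ α w ∈ F := fun w => by rw [hF]; rfl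
  let f : List A → Lang A × Lang A := fun u =>
    ({x | ∀ y, u ++ y ∈ L → x ++ y ∈ L}, {y | u ++ y ∈ L})
  refine ⟨Set.range f, ?_, ?_, ?_⟩
  · let g : N → Lang A × Lang A := fun n =>
      ({x | ∀ y, n * α y ∈ F → x ++ y ∈ L}, {y | n * α y ∈ F})
    refine (Set.finite_range g).subset ?_
    rintro _ ⟨u, rfl⟩
    refine ⟨α u, ?_⟩
    simp only [f, g, hm, hα.2]
  · rintro _ ⟨u, rfl⟩
    refine ⟨?_, (hqc L hL u).1⟩
    have : (f u).1 = ⋂₀ ((fun y => {x | x ++ y ∈ L}) '' {y | u ++ y ∈ L}) := by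
      ext x; simp [f]
    rw [this]
    refine fin_sInter hlat.2.1 hlat.2.2.2 ?_ ?_
    · refine (Set.finite_range (fun n : N => {x : List A | α x * n ∈ F})).subset ?_
      rintro _ ⟨y, _, rfl⟩
      refine ⟨α y, ?_⟩
      simp only [hm, hα.2]
    · rintro _ ⟨y, _, rfl⟩
      exact (hqc L hL y).2
  · intro u v
    constructor
    · intro h
      exact ⟨f u, ⟨u, rfl⟩, fun y hy => hy, h⟩
    · rintro ⟨_, ⟨w, rfl⟩, h1, h2⟩
      exact h1 v h2

lemma split_pol {𝒞 : LClass A} (h : ∀ L ∈ 𝒞, Split 𝒞 L) {L : Lang A} (hL : L ∈ PolC 𝒞) :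
    Split (PolC 𝒞) L := by
  refine polC_ind (P := Split (PolC 𝒞)) ?_ ?_ ?_ hL
  · intro L hL
    obtain ⟨S, hS, hS1, hS2⟩ := h L hL
    exact ⟨S, hS, fun p hp => ⟨polC_base (hS1 p hp).1, polC_base (hS1 p hp).2⟩, hS2⟩
  · rintro K L - - ⟨S, hS, hS1, hS2⟩ ⟨T, hT, hT1, hT2⟩
    refine ⟨S ∪ T, hS.union hT, ?_, ?_⟩
    · rintro p (hp | hp)
      exacts [hS1 p hp, hT1 p hp]
    · intro u v
      rw [mem_union, hS2, hT2]
      simp only [mem_union, or_and_right, exists_or]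
  · rintro K L a hK hL ⟨S, hS, hS1, hS2⟩ ⟨T, hT, hT1, hT2⟩
    refine ⟨(fun p : Lang A × Lang A => (p.1, mcat p.2 a L)) '' S ∪
      (fun p : Lang A × Lang A => (mcat K a p.1, p.2)) '' T,
      (hS.image _).union (hT.image _), ?_, ?_⟩
    · rintro _ (⟨p, hp, rfl⟩ | ⟨p, hp, rfl⟩)
      · exact ⟨(hS1 p hp).1, polC_mcat a (hS1 p hp).2 hL⟩
      · exact ⟨polC_mcat a hK (hT1 p hp).1, (hT1 p hp).2⟩
    · intro u v
      constructor
      · rintro ⟨k, hk, l, hl, e⟩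
        rcases List.append_eq_append_iff.1 e with ⟨x, rfl, e2⟩ | ⟨x, rfl, rfl⟩
        · cases x with
          | nil =>
            obtain ⟨p, hp, h1, h2⟩ := (hS2 k []).1 (by simpa using hk)
            exact ⟨_, Or.inl ⟨p, hp, rfl⟩, by simpa using h1, [], h2, l, hl, by simpa using e2⟩
          | cons b x =>
            simp only [List.cons_append, List.cons.injEq] at e2
            obtain ⟨rfl, rfl⟩ := e2
            obtain ⟨p, hp, h1, h2⟩ := (hT2 x v).1 hl
            exact ⟨_, Or.inr ⟨p, hp, rfl⟩, ⟨k, hk, x, h1, rfl⟩, h2⟩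
        · obtain ⟨p, hp, h1, h2⟩ := (hS2 u x).1 hk
          exact ⟨_, Or.inl ⟨p, hp, rfl⟩, h1, x, h2, l, hl, rfl⟩
      · rintro ⟨_, ⟨p, hp, rfl⟩ | ⟨p, hp, rfl⟩, h1, h2⟩
        · obtain ⟨x, hx, l, hl, rfl⟩ := h2
          exact ⟨u ++ x, (hS2 u x).2 ⟨p, hp, h1, hx⟩, l, hl, by simp⟩
        · obtain ⟨k, hk, x, hx, rfl⟩ := h1
          exact ⟨k, hk, x ++ v, (hT2 x v).2 ⟨p, hp, hx, h2⟩, by simp⟩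

lemma split_quot {𝒟 : LClass A} (h0 : (∅ : Lang A) ∈ 𝒟)
    (hu : ∀ K L : Lang A, K ∈ 𝒟 → L ∈ 𝒟 → K ∪ L ∈ 𝒟) (h : ∀ L ∈ 𝒟, Split 𝒟 L) :
    QuotientClosed 𝒟 := by
  intro L hL w
  obtain ⟨S, hS, hS1, hS2⟩ := h L hL
  constructor
  · have : {u : List A | w ++ u ∈ L} = ⋃₀ (Prod.snd '' {p ∈ S | w ∈ p.1}) := by
      ext x
      simp only [mem_setOf_eq, hS2, mem_sUnion, mem_image]
      constructor
      · rintro ⟨p, hp, h1, h2⟩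
        exact ⟨_, ⟨p, ⟨hp, h1⟩, rfl⟩, h2⟩
      · rintro ⟨_, ⟨p, ⟨hp, h1⟩, rfl⟩, h2⟩
        exact ⟨p, hp, h1, h2⟩
    rw [this]
    refine fin_sUnion h0 hu ((hS.subset (sep_subset _ _)).image _) ?_
    rintro _ ⟨p, hp, rfl⟩
    exact (hS1 p hp.1).2
  · have : {u : List A | u ++ w ∈ L} = ⋃₀ (Prod.fst '' {p ∈ S | w ∈ p.2}) := by
      ext x
      simp only [mem_setOf_eq, hS2, mem_sUnion, mem_image]
      constructor
      · rintro ⟨p, hp, h1, h2⟩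
        exact ⟨_, ⟨p, ⟨hp, h2⟩, rfl⟩, h1⟩
      · rintro ⟨_, ⟨p, ⟨hp, h1⟩, rfl⟩, h2⟩
        exact ⟨p, hp, h2, h1⟩
    rw [this]
    refine fin_sUnion h0 hu ((hS.subset (sep_subset _ _)).image _) ?_
    rintro _ ⟨p, hp, rfl⟩
    exact (hS1 p hp.1).1

lemma mcat_inter {𝒞 𝒟 : LClass A} (h0 : (∅ : Lang A) ∈ 𝒞) (hq : QuotientClosed 𝒟)
    {K L M : Lang A} (a : A) (hM : Split 𝒟 M)
    (hK : ∀ X ∈ 𝒟, X ∩ K ∈ PolC 𝒞) (hL : ∀ X ∈ 𝒟, X ∩ L ∈ PolC 𝒞) :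
    M ∩ mcat K a L ∈ PolC 𝒞 := by
  obtain ⟨S, hS, hS1, hS2⟩ := hM
  have : M ∩ mcat K a L = ⋃₀ ((fun p : Lang A × Lang A =>
      mcat (p.1 ∩ K) a ({u | [a] ++ u ∈ p.2} ∩ L)) '' S) := by
    ext x
    simp only [mem_sUnion, mem_image]
    constructor
    · rintro ⟨hx, k, hk, l, hl, rfl⟩
      obtain ⟨p, hp, h1, h2⟩ := (hS2 _ _).1 hx
      exact ⟨_, ⟨p, hp, rfl⟩, k, ⟨h1, hk⟩, l, ⟨h2, hl⟩, rfl⟩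
    · rintro ⟨_, ⟨p, hp, rfl⟩, k, ⟨h1, hk⟩, l, ⟨h2, hl⟩, rfl⟩
      exact ⟨(hS2 _ _).2 ⟨p, hp, h1, h2⟩, k, hk, l, hl, rfl⟩
  rw [this]
  refine fin_sUnion (polC_base h0) (fun _ _ => polC_union) (hS.image _) ?_
  rintro _ ⟨p, hp, rfl⟩
  exact polC_mcat a (hK _ (hS1 p hp).1) (hL _ (hq _ (hS1 p hp).2 [a]).1)

/-- For a quotient-closed lattice `𝒞` of regular languages,
`Pol 𝒞` is a quotient-closed lattice closed under concatenation and marked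
concatenation. -/
theorem statement6 {A : Type} [Fintype A] (𝒞 : LClass A) (hlat : LangLattice 𝒞)
    (hqc : QuotientClosed 𝒞) (hreg : ∀ L ∈ 𝒞, RegularLang L) :
    LangLattice (PolC 𝒞) ∧ QuotientClosed (PolC 𝒞) ∧
      (∀ K L : Lang A, K ∈ PolC 𝒞 → L ∈ PolC 𝒞 → cat K L ∈ PolC 𝒞) ∧
      (∀ (K L : Lang A) (a : A), K ∈ PolC 𝒞 → L ∈ PolC 𝒞 →
        mcat K a L ∈ PolC 𝒞) := by
  have hs : ∀ L ∈ 𝒞, Split 𝒞 L := fun L hL => split_base hlat hqc hL (hreg L hL)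
  have hsp : ∀ L ∈ PolC 𝒞, Split (PolC 𝒞) L := fun L hL => split_pol hs hL
  have h0 : (∅ : Lang A) ∈ PolC 𝒞 := polC_base hlat.1
  have hu : ∀ K L : Lang A, K ∈ PolC 𝒞 → L ∈ PolC 𝒞 → K ∪ L ∈ PolC 𝒞 :=
    fun _ _ => polC_union
  have hq : QuotientClosed (PolC 𝒞) := split_quot h0 hu hsp
  have hi1 : ∀ L ∈ PolC 𝒞, ∀ X ∈ 𝒞, X ∩ L ∈ PolC 𝒞 := by
    intro L hL
    refine polC_ind (P := fun L => ∀ X ∈ 𝒞, X ∩ L ∈ PolC 𝒞) ?_ ?_ ?_ hL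
    · exact fun L hL X hX => polC_base (hlat.2.2.2 _ _ hX hL)
    · intro K L _ _ h1 h2 X hX
      rw [inter_union_distrib_left]
      exact polC_union (h1 X hX) (h2 X hX)
    · intro K L a _ _ h1 h2 X hX
      exact mcat_inter hlat.1 hqc a (hs X hX) h1 h2
  have hi2 : ∀ L ∈ PolC 𝒞, ∀ X ∈ PolC 𝒞, X ∩ L ∈ PolC 𝒞 := by
    intro L hL
    refine polC_ind (P := fun L => ∀ X ∈ PolC 𝒞, X ∩ L ∈ PolC 𝒞) ?_ ?_ ?_ hL
    · intro L hL X hX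
      rw [inter_comm]
      exact hi1 X hX L hL
    · intro K L _ _ h1 h2 X hX
      rw [inter_union_distrib_left]
      exact polC_union (h1 X hX) (h2 X hX)
    · intro K L a _ _ h1 h2 X hX
      exact mcat_inter hlat.1 hq a (hsp X hX) h1 h2
  refine ⟨⟨h0, polC_base hlat.2.1, hu, fun K L hK hL => hi2 L hL K hK⟩, hq, ?_,
    fun K L a hK hL => polC_mcat a hK hL⟩
  intro K L hK hL
  have hT : ⋃₀ (Set.range fun a : A => mcat K a {u | [a] ++ u ∈ L}) ∈ PolC 𝒞 := by
    refine fin_sUnion h0 hu (Set.finite_range _) ?_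
    rintro _ ⟨a, rfl⟩
    exact polC_mcat a hK (hq L hL [a]).1
  have key : ∀ x, x ∈ cat K L ↔ (([] : List A) ∈ L ∧ x ∈ K) ∨
      x ∈ ⋃₀ (Set.range fun a : A => mcat K a {u | [a] ++ u ∈ L}) := by
    intro x
    constructor
    · rintro ⟨k, hk, l, hl, rfl⟩
      cases l with
      | nil => exact Or.inl ⟨hl, by simpa using hk⟩
      | cons a l => exact Or.inr ⟨_, ⟨a, rfl⟩, k, hk, l, hl, rfl⟩
    · rintro (⟨h1, h2⟩ | ⟨_, ⟨a, rfl⟩, k, hk, l, hl, rfl⟩)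
      · exact ⟨x, h2, [], h1, by simp⟩
      · exact ⟨k, hk, a :: l, hl, rfl⟩
  by_cases hε : ([] : List A) ∈ L
  · have : cat K L = K ∪ ⋃₀ (Set.range fun a : A => mcat K a {u | [a] ++ u ∈ L}) := by
      ext x
      rw [key, mem_union, and_iff_right hε]
    rw [this]
    exact polC_union hK hT
  · have : cat K L = ⋃₀ (Set.range fun a : A => mcat K a {u | [a] ++ u ∈ L}) := by
      ext x
      rw [key]
      simp only [hε, false_and, false_or]
    rw [this]
    exact hT

end Paper
end

section
/- Let D be a lattice of languages closed under concatenation, let L, L' ∈ D, and let K, K' be Bool(D)-covers of L and L' respectively. Then there exists a Bool(D)-cover H of the concatenation LL' such that for every H ∈ H there exist K ∈ K and K' ∈ K' with H ⊆ KK'. -/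
open Set

namespace Paper

variable {A R M : Type}

theorem boolC_isBoolAlg (𝒟 : LClass A) : LangBoolAlg (BoolC 𝒟) := by
  refine ⟨⟨?_, ?_, ?_, ?_⟩, ?_⟩
  · intro E hE; exact hE.1.1.1
  · intro E hE; exact hE.1.1.2.1
  · intro K L hK hL E hE; exact hE.1.1.2.2.1 K L (hK E hE) (hL E hE)
  · intro K L hK hL E hE; exact hE.1.1.2.2.2 K L (hK E hE) (hL E hE)
  · intro L hL E hE; exact hE.1.2 L (hL E hE)

theorem subset_boolC (𝒟 : LClass A) : 𝒟 ⊆ BoolC 𝒟 := fun _ hX _ hE => hE.2 hX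

/-- `K` is saturated for `F`-types. -/
def Sat (F : LClass A) (K : Lang A) : Prop :=
  ∀ u v : List A, (∀ P ∈ F, u ∈ P ↔ v ∈ P) → (u ∈ K ↔ v ∈ K)

theorem Sat.mono {F G : LClass A} {K : Lang A} (h : Sat F K) (hFG : F ⊆ G) : Sat G K :=
  fun u v huv => h u v fun P hP => huv P (hFG hP)

theorem exists_sat (𝒟 : LClass A) (K : Lang A) (hK : K ∈ BoolC 𝒟) :
    ∃ F : LClass A, F.Finite ∧ F ⊆ 𝒟 ∧ Sat F K := by
  refine hK {K | ∃ F : LClass A, F.Finite ∧ F ⊆ 𝒟 ∧ Sat F K} ⟨⟨⟨?_, ?_, ?_, ?_⟩, ?_⟩, ?_⟩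
  · exact ⟨∅, finite_empty, empty_subset _, fun u v _ => Iff.rfl⟩
  · exact ⟨∅, finite_empty, empty_subset _, fun u v _ => Iff.rfl⟩
  · rintro K L ⟨F, hF, hFD, hFs⟩ ⟨G, hG, hGD, hGs⟩
    refine ⟨F ∪ G, hF.union hG, union_subset hFD hGD, fun u v h => ?_⟩
    exact or_congr (hFs.mono subset_union_left u v h) (hGs.mono subset_union_right u v h)
  · rintro K L ⟨F, hF, hFD, hFs⟩ ⟨G, hG, hGD, hGs⟩
    refine ⟨F ∪ G, hF.union hG, union_subset hFD hGD, fun u v h => ?_⟩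
    exact and_congr (hFs.mono subset_union_left u v h) (hGs.mono subset_union_right u v h)
  · rintro K ⟨F, hF, hFD, hFs⟩
    exact ⟨F, hF, hFD, fun u v h => not_congr (hFs u v h)⟩
  · intro K hK
    exact ⟨{K}, finite_singleton _, singleton_subset_iff.2 hK, fun u v h => h K rfl⟩

theorem exists_sat_finite (𝒟 Ks : LClass A) (hf : Ks.Finite) (hK : Ks ⊆ BoolC 𝒟) :
    ∃ F : LClass A, F.Finite ∧ F ⊆ 𝒟 ∧ ∀ K ∈ Ks, Sat F K := by
  choose! F h1 h2 h3 using fun K (h : K ∈ Ks) => exists_sat 𝒟 K (hK h)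
  refine ⟨⋃ K ∈ Ks, F K, hf.biUnion h1, iUnion₂_subset h2, fun K h => (h3 K h).mono ?_⟩
  exact subset_biUnion_of_mem (u := F) h

theorem sInter_mem_lat {𝒟 : LClass A} (h : LangLattice 𝒟) {s : LClass A} (hs : s.Finite)
    (hsD : s ⊆ 𝒟) : ⋂₀ s ∈ 𝒟 := by
  induction s, hs using Set.Finite.induction_on with
  | empty => simpa using h.2.1
  | insert _ _ ih =>
    rw [sInter_insert]
    exact h.2.2.2 _ _ (hsD (mem_insert _ _)) (ih fun x hx => hsD (mem_insert_of_mem _ hx))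

theorem sUnion_mem_lat {𝒟 : LClass A} (h : LangLattice 𝒟) {s : LClass A} (hs : s.Finite)
    (hsD : s ⊆ 𝒟) : ⋃₀ s ∈ 𝒟 := by
  induction s, hs using Set.Finite.induction_on with
  | empty => simpa using h.1
  | insert _ _ ih =>
    rw [sUnion_insert]
    exact h.2.2.1 _ _ (hsD (mem_insert _ _)) (ih fun x hx => hsD (mem_insert_of_mem _ hx))

/-- Concatenation of the two intersections. -/
def pc (p : LClass A × LClass A) : Lang A := cat (⋂₀ p.1) (⋂₀ p.2)

/-- The words of `pc p` lying in no strictly larger `pc q`. -/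
def hc (F : LClass A) (p : LClass A × LClass A) : Lang A :=
  pc p ∩ (⋃₀ (pc '' {q | q ∈ (𝒫 F) ×ˢ (𝒫 F) ∧ p < q}))ᶜ

theorem hc_types {F : LClass A} {p : LClass A × LClass A} (hp : p ∈ (𝒫 F) ×ˢ (𝒫 F))
    {w : List A} (hw : w ∈ hc F p) :
    ∃ u v, u ++ v = w ∧ {P | P ∈ F ∧ u ∈ P} = p.1 ∧ {P | P ∈ F ∧ v ∈ P} = p.2 := by
  obtain ⟨⟨u, hu, v, hv, rfl⟩, hn⟩ := hw
  refine ⟨u, v, rfl, ?_⟩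
  have hle : p ≤ ({P | P ∈ F ∧ u ∈ P}, {P | P ∈ F ∧ v ∈ P}) :=
    ⟨fun P hP => ⟨hp.1 hP, hu P hP⟩, fun P hP => ⟨hp.2 hP, hv P hP⟩⟩
  rcases hle.eq_or_lt with h | h
  · rw [h]; exact ⟨rfl, rfl⟩
  · exact (hn ⟨_, ⟨({P | P ∈ F ∧ u ∈ P}, {P | P ∈ F ∧ v ∈ P}), ⟨⟨fun P hP => hP.1, fun P hP => hP.1⟩, h⟩, rfl⟩,
      ⟨u, fun P hP => hP.2, v, fun P hP => hP.2, rfl⟩⟩).elim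

/-- Weak concatenation principle for Boolean closure. -/
theorem statement7 {A : Type} [Fintype A] (𝒟 : LClass A) (hlat : LangLattice 𝒟)
    (hcat : ∀ K L : Lang A, K ∈ 𝒟 → L ∈ 𝒟 → cat K L ∈ 𝒟)
    (L L' : Lang A) (hL : L ∈ 𝒟) (hL' : L' ∈ 𝒟)
    (Ks Ks' : LClass A)
    (hKs : IsCCover (BoolC 𝒟) Ks L) (hKs' : IsCCover (BoolC 𝒟) Ks' L') :
    ∃ Hs : LClass A, IsCCover (BoolC 𝒟) Hs (cat L L') ∧
      ∀ H ∈ Hs, ∃ K ∈ Ks, ∃ K' ∈ Ks', H ⊆ cat K K' := by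
  obtain ⟨F₁, f1, d1, s1⟩ := exists_sat_finite 𝒟 Ks hKs.1.1 hKs.2
  obtain ⟨F₂, f2, d2, s2⟩ := exists_sat_finite 𝒟 Ks' hKs'.1.1 hKs'.2
  obtain ⟨F, hF, hFD, hLF, hLF', hs, hs'⟩ : ∃ F : LClass A, F.Finite ∧ F ⊆ 𝒟 ∧ L ∈ F ∧ L' ∈ F ∧
      (∀ K ∈ Ks, Sat F K) ∧ (∀ K ∈ Ks', Sat F K) := by
    refine ⟨(F₁ ∪ F₂) ∪ {L, L'}, (f1.union f2).union (by simp), ?_, by simp, by simp,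
      fun K hK => (s1 K hK).mono ?_, fun K hK => (s2 K hK).mono ?_⟩
    · refine union_subset (union_subset d1 d2) ?_
      rintro x (rfl | rfl) <;> assumption
    · exact subset_union_left.trans subset_union_left
    · exact subset_union_right.trans subset_union_left
  have hfin : ((𝒫 F) ×ˢ (𝒫 F) : Set (LClass A × LClass A)).Finite :=
    hF.finite_subsets.prod hF.finite_subsets
  have hpc : ∀ p ∈ (𝒫 F) ×ˢ (𝒫 F), pc p ∈ 𝒟 := fun p hp =>
    hcat _ _ (sInter_mem_lat hlat (hF.subset hp.1) (hp.1.trans hFD))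
      (sInter_mem_lat hlat (hF.subset hp.2) (hp.2.trans hFD))
  have hB := boolC_isBoolAlg 𝒟
  refine ⟨{H | H ∈ hc F '' ((𝒫 F) ×ˢ (𝒫 F)) ∧ ∃ K ∈ Ks, ∃ K' ∈ Ks', H ⊆ cat K K'},
    ⟨⟨(hfin.image _).subset fun H h => h.1, ?_⟩, ?_⟩, fun H h => h.2⟩
  · rintro w ⟨u, hu, v, hv, rfl⟩
    let S : Set (LClass A × LClass A) :=
      {p | p ∈ (𝒫 F) ×ˢ (𝒫 F) ∧ L ∈ p.1 ∧ L' ∈ p.2 ∧ u ++ v ∈ pc p}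
    have hS : S.Finite := hfin.subset fun p h => h.1
    have hne : S.Nonempty := ⟨({P | P ∈ F ∧ u ∈ P}, {P | P ∈ F ∧ v ∈ P}),
      ⟨fun P hP => hP.1, fun P hP => hP.1⟩, ⟨hLF, hu⟩, ⟨hLF', hv⟩,
      ⟨u, fun P hP => hP.2, v, fun P hP => hP.2, rfl⟩⟩
    obtain ⟨p, hp⟩ := hS.exists_maximal hne
    obtain ⟨⟨hpF, hpL, hpL', hpw⟩, hmax⟩ := hp
    have hw : u ++ v ∈ hc F p := by
      refine ⟨hpw, ?_⟩
      rintro ⟨_, ⟨q, ⟨hq, hlt⟩, rfl⟩, hwq⟩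
      exact hlt.not_ge (hmax ⟨hq, hlt.le.1 hpL, hlt.le.2 hpL', hwq⟩ hlt.le)
    refine ⟨hc F p, ⟨⟨p, hpF, rfl⟩, ?_⟩, hw⟩
    obtain ⟨a, b, -, ha, hb⟩ := hc_types hpF hw
    have haL : a ∈ L := by rw [← ha] at hpL; exact hpL.2
    have hbL : b ∈ L' := by rw [← hb] at hpL'; exact hpL'.2
    obtain ⟨K, hK, haK⟩ := hKs.1.2 haL
    obtain ⟨K', hK', hbK⟩ := hKs'.1.2 hbL
    refine ⟨K, hK, K', hK', fun x hx => ?_⟩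
    obtain ⟨c, d, hcd, hc1, hd1⟩ := hc_types hpF hx
    refine ⟨c, (hs K hK a c fun P hP => ?_).1 haK, d, (hs' K' hK' b d fun P hP => ?_).1 hbK, hcd⟩
    · have := Set.ext_iff.1 (ha.trans hc1.symm) P
      simpa [hP] using this
    · have := Set.ext_iff.1 (hb.trans hd1.symm) P
      simpa [hP] using this
  · rintro H ⟨⟨p, hp, rfl⟩, -⟩
    refine hB.1.2.2.2 _ _ (subset_boolC _ (hpc p hp)) (hB.2 _ (subset_boolC _ ?_))
    refine sUnion_mem_lat hlat ((hfin.subset fun q h => h.1).image _) ?_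
    rintro _ ⟨q, hq, rfl⟩
    exact hpc q hq.1

end Paper
end

section
/- Let D be a lattice of languages over a finite alphabet A, let ρ : 2^{A*} → R be a rating map, and let L ⊆ A* be a language. Then there exists an optimal D-cover of L for ρ, i.e., a D-cover K of L such that I[ρ](K) ⊆ I[ρ](K') for every D-cover K' of L. -/
open Set

namespace Paper

variable {A R M : Type}

/-- For any lattice `𝒟`, rating map `ρ` and language `L`,
there exists an optimal `𝒟`-cover of `L` for `ρ`. -/
theorem statement9 {A R : Type} [Fintype A] [AddCommMonoid R] [Finite R]
    (hidem : ∀ r : R, r + r = r)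
    (𝒟 : LClass A) (hlat : LangLattice 𝒟)
    (ρ : Lang A → R) (hρ : IsRatingMap ρ) (L : Lang A) :
    ∃ Ks : LClass A, IsCCover 𝒟 Ks L ∧
      ∀ Ks' : LClass A, IsCCover 𝒟 Ks' L → imprint ρ Ks ⊆ imprint ρ Ks' := by
  classical
  obtain ⟨-, huniv, -, hinter⟩ := hlat
  let S : Set (Set R) := {I | ∃ Ks : LClass A, IsCCover 𝒟 Ks L ∧ imprint ρ Ks = I}
  have hS : S.Nonempty :=
    ⟨_, {Set.univ}, ⟨⟨Set.finite_singleton _, by simp⟩, by simpa using huniv⟩, rfl⟩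
  obtain ⟨I, hI⟩ := (Set.toFinite S).exists_minimal hS
  obtain ⟨Ks, hKs, rfl⟩ := hI.prop
  refine ⟨Ks, hKs, fun Ks' hKs' => ?_⟩
  have hmono : ∀ (r : R) (K K' : Lang A), K ⊆ K' → rle r (ρ K) → rle r (ρ K') := by
    intro r K K' hsub h
    have e : ρ K' = ρ K + ρ K' := by rw [← hρ.2, Set.union_eq_self_of_subset_left hsub]
    unfold rle at h ⊢
    rw [e, ← add_assoc, h]
  let T : LClass A := Set.image2 (fun K K' => K ∩ K') Ks Ks'
  have hT : IsCCover 𝒟 T L := by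
    refine ⟨⟨hKs.1.1.image2 _ hKs'.1.1, ?_⟩, ?_⟩
    · intro w hw
      obtain ⟨K, hK, hwK⟩ := hKs.1.2 hw
      obtain ⟨K', hK', hwK'⟩ := hKs'.1.2 hw
      exact ⟨K ∩ K', ⟨K, hK, K', hK', rfl⟩, hwK, hwK'⟩
    · rintro _ ⟨K, hK, K', hK', rfl⟩
      exact hinter _ _ (hKs.2 hK) (hKs'.2 hK')
  have h1 : imprint ρ T ⊆ imprint ρ Ks := by
    rintro r ⟨_, ⟨K, hK, K', hK', rfl⟩, hr⟩
    exact ⟨K, hK, hmono r _ _ Set.inter_subset_left hr⟩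
  have h2 : imprint ρ T ⊆ imprint ρ Ks' := by
    rintro r ⟨_, ⟨K, hK, K', hK', rfl⟩, hr⟩
    exact ⟨K', hK', hmono r _ _ Set.inter_subset_right hr⟩
  exact (hI.le_of_le ⟨T, hT, rfl⟩ h1).trans h2

end Paper
end

section
/- Let ρ : 2^{A*} → R be a rating map, D a lattice of languages, and H, L ⊆ A* two languages. Then I_D[H ∪ L, ρ] = I_D[H, ρ] ∪ I_D[L, ρ]. -/
open Set

namespace Paper

variable {A R M : Type}

/-- Optimal imprints commute with union of languages. -/
theorem statement10 {A R : Type} [Fintype A] [AddCommMonoid R] [Finite R]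
    (hidem : ∀ r : R, r + r = r)
    (𝒟 : LClass A) (hlat : LangLattice 𝒟)
    (ρ : Lang A → R) (hρ : IsRatingMap ρ) (H L : Lang A) :
    optImprint 𝒟 ρ (H ∪ L) = optImprint 𝒟 ρ H ∪ optImprint 𝒟 ρ L := by
  ext r
  constructor
  · intro hr
    by_contra hn
    simp only [Set.mem_union, not_or] at hn
    obtain ⟨h1, h2⟩ := hn
    simp only [optImprint, Set.mem_setOf_eq, not_forall] at h1 h2
    obtain ⟨K1, c1, n1⟩ := h1
    obtain ⟨K2, c2, n2⟩ := h2
    have hc : IsCCover 𝒟 (K1 ∪ K2) (H ∪ L) := by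
      refine ⟨⟨c1.1.1.union c2.1.1, ?_⟩, Set.union_subset c1.2 c2.2⟩
      rw [Set.sUnion_union]
      exact Set.union_subset_union c1.1.2 c2.1.2
    obtain ⟨K, hK, hle⟩ := hr _ hc
    rcases hK with hK | hK
    · exact n1 ⟨K, hK, hle⟩
    · exact n2 ⟨K, hK, hle⟩
  · rintro (hr | hr) Ks hc
    · exact hr Ks ⟨⟨hc.1.1, Set.subset_union_left.trans hc.1.2⟩, hc.2⟩
    · exact hr Ks ⟨⟨hc.1.1, Set.subset_union_right.trans hc.1.2⟩, hc.2⟩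

end Paper
end

section
/- Let D be a lattice of languages over a finite alphabet A, let α : A* → M be a map into a finite set M, and let ρ : 2^{A*} → R be a rating map. Then the maps τ_{D,ρ} : 2^{A*} → 2^R defined by τ_{D,ρ}(K) = I_D[K, ρ], and τ_{D,α,ρ} : 2^{A*} → 2^{M×R} defined by τ_{D,α,ρ}(K) = {(s,r) : r ∈ I_D[α⁻¹(s) ∩ K, ρ]}, are both rating maps: each maps ∅ to ∅ and commutes with binary union. -/
open Set

namespace Paper

variable {A R M : Type}

/-- The nested rating map `K ↦ I_𝒟[K, ρ]`. -/
def tauD [Add R] (𝒟 : LClass A) (ρ : Lang A → R) : Lang A → Set R :=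
  fun K => optImprint 𝒟 ρ K

/-- The pointed nested rating map `K ↦ {(s, r) : r ∈ I_𝒟[α⁻¹(s) ∩ K, ρ]}`. -/
def tauDp [Add R] (𝒟 : LClass A) (α : List A → M) (ρ : Lang A → R) :
    Lang A → Set (M × R) :=
  fun K => {p | p.2 ∈ optImprint 𝒟 ρ (α ⁻¹' {p.1} ∩ K)}

theorem optImprint_empty_aux {A R : Type} [Add R] (𝒟 : LClass A) (ρ : Lang A → R) :
    optImprint 𝒟 ρ (∅ : Lang A) = ∅ := by
  ext r
  simp only [Set.mem_empty_iff_false, iff_false]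
  intro h
  obtain ⟨K, hK, _⟩ := h ∅ ⟨⟨Set.finite_empty, Set.empty_subset _⟩, Set.empty_subset _⟩
  exact hK

theorem optImprint_union_aux {A R : Type} [Add R] (𝒟 : LClass A) (ρ : Lang A → R)
    (K L : Lang A) :
    optImprint 𝒟 ρ (K ∪ L) = optImprint 𝒟 ρ K ∪ optImprint 𝒟 ρ L := by
  ext r
  constructor
  · intro h
    by_contra hn
    rw [Set.mem_union, not_or] at hn
    obtain ⟨h1, h2⟩ := hn
    simp only [optImprint, Set.mem_setOf_eq, not_forall] at h1 h2
    obtain ⟨Ks, ⟨⟨hf, hc⟩, hd⟩, hr⟩ := h1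
    obtain ⟨Ls, ⟨⟨hf', hc'⟩, hd'⟩, hr'⟩ := h2
    obtain ⟨X, hX, hle⟩ := h (Ks ∪ Ls) ⟨⟨hf.union hf', by
      rw [Set.sUnion_union]; exact Set.union_subset_union hc hc'⟩, Set.union_subset hd hd'⟩
    rcases hX with hX | hX
    · exact hr ⟨X, hX, hle⟩
    · exact hr' ⟨X, hX, hle⟩
  · rintro (h | h) Ks ⟨⟨hf, hc⟩, hd⟩
    · exact h Ks ⟨⟨hf, Set.subset_union_left.trans hc⟩, hd⟩
    · exact h Ks ⟨⟨hf, Set.subset_union_right.trans hc⟩, hd⟩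

/-- The maps `τ_{𝒟,ρ}` and `τ_{𝒟,α,ρ}` are rating maps. -/
theorem statement11 {A R M : Type} [Fintype A] [AddCommMonoid R] [Finite R]
    [Finite M] (hidem : ∀ r : R, r + r = r)
    (𝒟 : LClass A) (hlat : LangLattice 𝒟) (α : List A → M)
    (ρ : Lang A → R) (hρ : IsRatingMap ρ) :
    (tauD 𝒟 ρ (∅ : Lang A) = ∅ ∧
      ∀ K L : Lang A, tauD 𝒟 ρ (K ∪ L) = tauD 𝒟 ρ K ∪ tauD 𝒟 ρ L) ∧
    (tauDp 𝒟 α ρ (∅ : Lang A) = ∅ ∧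
      ∀ K L : Lang A,
        tauDp 𝒟 α ρ (K ∪ L) = tauDp 𝒟 α ρ K ∪ tauDp 𝒟 α ρ L) := by
  refine ⟨⟨optImprint_empty_aux 𝒟 ρ, optImprint_union_aux 𝒟 ρ⟩, ?_, ?_⟩
  · ext p
    simp [tauDp, optImprint_empty_aux]
  · intro K L
    ext p
    simp only [tauDp, Set.inter_union_distrib_left, optImprint_union_aux, Set.mem_setOf_eq,
      Set.mem_union]

end Paper
end

section
/- Let C be a quotient-closed lattice whose members are all regular languages, and let ρ : 2^{A*} → R be a rating map that is quasi-multiplicative for an endomorphism γ of (R,+). Then for all languages H, L ⊆ A*, all q ∈ I_C[H, ρ] and all r ∈ I_C[L, ρ], we have γ(q·r) ∈ I_C[HL, ρ]. -/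
open Set

namespace Paper

variable {A R M : Type}

theorem finite_left (K : Lang A) (h : RegularLang K) :
    (Set.range fun w : List A => {u : List A | w ++ u ∈ K}).Finite := by
  obtain ⟨N, _, _, α, ⟨_, hm⟩, F, rfl⟩ := h
  refine (Set.finite_range fun n : N => {u : List A | n * α u ∈ F}).subset ?_
  rintro _ ⟨w, rfl⟩
  refine ⟨α w, ?_⟩
  ext u
  simp [hm]

theorem finite_right (K : Lang A) (h : RegularLang K) :
    (Set.range fun w : List A => {u : List A | u ++ w ∈ K}).Finite := by
  obtain ⟨N, _, _, α, ⟨_, hm⟩, F, rfl⟩ := h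
  refine (Set.finite_range fun n : N => {u : List A | α u * n ∈ F}).subset ?_
  rintro _ ⟨w, rfl⟩
  refine ⟨α w, ?_⟩
  ext u
  simp [hm]

theorem sInter_mem_class (𝒞 : LClass A) (hlat : LangLattice 𝒞) (S : Set (Lang A))
    (hS : S.Finite) (h : S ⊆ 𝒞) : ⋂₀ S ∈ 𝒞 := by
  induction S, hS using Set.Finite.induction_on with
  | empty => simpa using hlat.2.1
  | insert _ _ ih =>
    rw [Set.sInter_insert]
    exact hlat.2.2.2 _ _ (h (Set.mem_insert _ _))
      (ih fun x hx => h (Set.mem_insert_of_mem _ hx))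

theorem inter_mem_class (𝒞 : LClass A) (hlat : LangLattice 𝒞) (hqc : QuotientClosed 𝒞)
    (hreg : ∀ L ∈ 𝒞, RegularLang L) (K : Lang A) (hK : K ∈ 𝒞) (V : Lang A) :
    {u : List A | ∀ v ∈ V, u ++ v ∈ K} ∈ 𝒞 := by
  have h := sInter_mem_class 𝒞 hlat ((fun w : List A => {u : List A | u ++ w ∈ K}) '' V)
    ((finite_right K (hreg K hK)).subset (Set.image_subset_range _ _))
    (by rintro _ ⟨w, _, rfl⟩; exact (hqc K hK w).2)
  convert h using 1
  ext u
  simp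

/-- Multiplication of optimal imprints, for quasi-multiplicative
rating maps and quotient-closed lattices of regular languages. -/
theorem statement12 {A R : Type} [Fintype A] [Semiring R] [Finite R]
    (hidem : ∀ r : R, r + r = r)
    (𝒞 : LClass A) (hlat : LangLattice 𝒞) (hqc : QuotientClosed 𝒞)
    (hreg : ∀ L ∈ 𝒞, RegularLang L)
    (ρ : Lang A → R) (hρ : IsRatingMap ρ) (γ : R → R) (hγ : IsQuasiMult ρ γ)
    (H L : Lang A) (q r : R)
    (hq : q ∈ optImprint 𝒞 ρ H) (hr : r ∈ optImprint 𝒞 ρ L) :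
    γ (q * r) ∈ optImprint 𝒞 ρ (cat H L) := by
  intro Ks hKs
  obtain ⟨⟨hfin, hcov⟩, hsub⟩ := hKs
  obtain ⟨⟨_, hγa⟩, _, hγm⟩ := hγ
  obtain ⟨W, ⟨K, hK, u, hru, rfl⟩, hqW⟩ := hq
    {W | ∃ K ∈ Ks, ∃ u : List A, rle r (ρ {v | u ++ v ∈ K}) ∧
      W = {x : List A | ∀ v ∈ {v : List A | u ++ v ∈ K}, x ++ v ∈ K}} (by
    refine ⟨⟨?_, ?_⟩, ?_⟩
    · refine (hfin.biUnion fun K hK => (finite_left K (hreg K (hsub hK))).image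
        fun V => {x : List A | ∀ v ∈ V, x ++ v ∈ K}).subset ?_
      rintro _ ⟨K, hK, u, _, rfl⟩
      exact Set.mem_biUnion hK ⟨_, ⟨u, rfl⟩, rfl⟩
    · intro u hu
      obtain ⟨_, ⟨K, hK, rfl⟩, hrK⟩ := hr
        ((fun K : Lang A => {v : List A | u ++ v ∈ K}) '' Ks) (by
        refine ⟨⟨hfin.image _, ?_⟩, ?_⟩
        · intro v hv
          obtain ⟨K, hK, h⟩ := hcov (show u ++ v ∈ cat H L from ⟨u, hu, v, hv, rfl⟩)
          exact ⟨_, ⟨K, hK, rfl⟩, h⟩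
        · rintro _ ⟨K, hK, rfl⟩
          exact (hqc K (hsub hK) u).1)
      exact ⟨_, ⟨K, hK, u, hrK, rfl⟩, fun v hv => hv⟩
    · rintro _ ⟨K, hK, u, _, rfl⟩
      exact inter_mem_class 𝒞 hlat hqc hreg K (hsub hK) _)
  refine ⟨K, hK, ?_⟩
  generalize hV : {v : List A | u ++ v ∈ K} = V at *
  generalize hU : {x : List A | ∀ v ∈ V, x ++ v ∈ K} = U at *
  have hUV : cat U V ∪ K = K := by
    apply Set.union_eq_self_of_subset_left
    rintro _ ⟨x, hx, v, hv, rfl⟩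
    rw [← hU] at hx
    exact hx v hv
  have h1 : γ (ρ U * ρ V) + ρ K = ρ K := by rw [← hγm, ← hρ.2, hUV]
  unfold rle at *
  have h2 : γ (q * r) + γ (ρ U * ρ V) = γ (ρ U * ρ V) := by
    rw [← hγa]
    congr 1
    have e1 : q * ρ V + ρ U * ρ V = ρ U * ρ V := by rw [← add_mul, hqW]
    have e2 : q * r + q * ρ V = q * ρ V := by rw [← mul_add, hru]
    rw [← e1, ← add_assoc, e2]
  rw [← h1, ← add_assoc, h2]

end Paper
end

section
/- Let D be a quotient-closed lattice, whose members are all regular languages, closed under concatenation; let α : A* → M be a monoid morphism into a finite monoid, and let ρ : 2^{A*} → R be a rating map quasi-multiplicative for an endomorphism γ of (R,+). Then the rating map τ_{D,α,ρ} : 2^{A*} → 2^{M×R} is quasi-multiplicative for the endomorphism μ of (2^{M×R}, ∪) defined by μ(T) = ↓_R {(s, γ(r)) : (s,r) ∈ T}. -/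
open Set

namespace Paper

variable {A R M : Type}

/-- Componentwise multiplication of subsets of `M × R`. -/
def pmul [Mul M] [Mul R] (T U : Set (M × R)) : Set (M × R) :=
  {p | ∃ t ∈ T, ∃ u ∈ U, (t.1 * u.1, t.2 * u.2) = p}

/-- The endomorphism `μ(T) = ↓_R {(s, γ(r)) : (s, r) ∈ T}` of `(2^{M×R}, ∪)`. -/
def muMap [Add R] (γ : R → R) (T : Set (M × R)) : Set (M × R) :=
  {p | ∃ q : R, (p.1, q) ∈ T ∧ rle p.2 (γ q)}

theorem rle_mono [AddCommMonoid R] {ρ : Lang A → R} (hρ : IsRatingMap ρ) {K L : Lang A}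
    (h : K ⊆ L) : rle (ρ K) (ρ L) := by
  unfold rle
  rw [← hρ.2, Set.union_eq_self_of_subset_left h]

theorem rle_tr [AddCommMonoid R] {a b c : R} (h : rle a b) (h' : rle b c) : rle a c := by
  unfold rle at *
  rw [← h', ← add_assoc, h]

theorem rle_mul [Semiring R] {a b c d : R} (h : rle a b) (h' : rle c d) :
    rle (a * c) (b * d) := by
  unfold rle at *
  have h1 : a * d + b * d = b * d := by rw [← add_mul, h]
  have h2 : a * c + a * d = a * d := by rw [← mul_add, h']
  rw [← h1, ← add_assoc, h2]

theorem rle_endo [AddCommMonoid R] {γ : R → R} (hγ : IsAddEndo γ) {a b : R} (h : rle a b) :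
    rle (γ a) (γ b) := by
  unfold rle at *
  rw [← hγ.2, h]

theorem exists_opt [AddCommMonoid R] [Finite R] {𝒟 : LClass A} (hlat : LangLattice 𝒟)
    {ρ : Lang A → R} (hρ : IsRatingMap ρ) (L : Lang A) :
    ∃ Ks, IsCCover 𝒟 Ks L ∧ imprint ρ Ks ⊆ optImprint 𝒟 ρ L := by
  suffices H : ∀ S : Set R, S.Finite → ∃ Ks, IsCCover 𝒟 Ks L ∧
      ∀ r ∈ S, r ∈ imprint ρ Ks → r ∈ optImprint 𝒟 ρ L by
    obtain ⟨Ks, h1, h2⟩ := H Set.univ Set.finite_univ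
    exact ⟨Ks, h1, fun r hr => h2 r trivial hr⟩
  intro S hS
  induction S, hS using Set.Finite.induction_on with
  | empty =>
    refine ⟨{Set.univ}, ⟨⟨Set.finite_singleton _, by simp⟩, ?_⟩, by simp⟩
    rintro _ rfl
    exact hlat.2.1
  | @insert a S _ _ ih =>
    obtain ⟨Ks, ⟨⟨hf, hc⟩, hD⟩, h2⟩ := ih
    by_cases ha : a ∈ optImprint 𝒟 ρ L
    · refine ⟨Ks, ⟨⟨hf, hc⟩, hD⟩, ?_⟩
      rintro r (rfl | hr) h
      · exact ha
      · exact h2 r hr h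
    · have ha' : ∃ Ks', IsCCover 𝒟 Ks' L ∧ a ∉ imprint ρ Ks' := by
        by_contra hcon
        apply ha
        intro Ks' h
        by_contra h3
        exact hcon ⟨Ks', h, h3⟩
      obtain ⟨Ks', ⟨⟨hf', hc'⟩, hD'⟩, h3⟩ := ha'
      refine ⟨Set.image2 (· ∩ ·) Ks Ks', ⟨⟨hf.image2 _ hf', ?_⟩, ?_⟩, ?_⟩
      · intro w hw
        obtain ⟨K, hK, hwK⟩ := hc hw
        obtain ⟨K', hK', hwK'⟩ := hc' hw
        exact ⟨K ∩ K', ⟨K, hK, K', hK', rfl⟩, hwK, hwK'⟩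
      · rintro _ ⟨K, hK, K', hK', rfl⟩
        exact hlat.2.2.2 _ _ (hD hK) (hD' hK')
      · rintro r hr ⟨_, ⟨K, hK, K', hK', rfl⟩, hle⟩
        rcases hr with rfl | hr
        · exact absurd ⟨K', hK', rle_tr hle (rle_mono hρ Set.inter_subset_right)⟩ h3
        · exact h2 r hr ⟨K, hK, rle_tr hle (rle_mono hρ Set.inter_subset_left)⟩

theorem finite_lq {K : Lang A} (h : RegularLang K) :
    (Set.range fun w : List A => {u : List A | w ++ u ∈ K}).Finite := by
  obtain ⟨N, _, _, β, hβ, F, rfl⟩ := h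
  apply (Set.finite_range fun n : N => {u : List A | n * β u ∈ F}).subset
  rintro _ ⟨w, rfl⟩
  exact ⟨β w, by ext u; simp [hβ.2]⟩

theorem finite_rq {K : Lang A} (h : RegularLang K) :
    (Set.range fun w : List A => {u : List A | u ++ w ∈ K}).Finite := by
  obtain ⟨N, _, _, β, hβ, F, rfl⟩ := h
  apply (Set.finite_range fun n : N => {u : List A | β u * n ∈ F}).subset
  rintro _ ⟨w, rfl⟩
  exact ⟨β w, by ext u; simp [hβ.2]⟩

theorem sInter_memD {𝒟 : LClass A} (hlat : LangLattice 𝒟) {S : LClass A} (hS : S.Finite)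
    (h : S ⊆ 𝒟) : ⋂₀ S ∈ 𝒟 := by
  induction S, hS using Set.Finite.induction_on with
  | empty => simpa using hlat.2.1
  | @insert a S _ _ ih =>
    rw [Set.sInter_insert]
    exact hlat.2.2.2 _ _ (h (Set.mem_insert _ _)) (ih fun x hx => h (Set.mem_insert_of_mem _ hx))

/-- The words that can be put before every word of `Q` to land in `K`. -/
def resid (K Q : Lang A) : Lang A := ⋂₀ ((fun v : List A => {u : List A | u ++ v ∈ K}) '' Q)

theorem mem_resid {K Q : Lang A} {u : List A} : u ∈ resid K Q ↔ ∀ v ∈ Q, u ++ v ∈ K := by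
  simp [resid]

/-- `τ_{𝒟,α,ρ}` is quasi-multiplicative for `μ`. -/
theorem statement13 {A R M : Type} [Fintype A] [Semiring R] [Finite R]
    [Monoid M] [Finite M] (hidem : ∀ r : R, r + r = r)
    (𝒟 : LClass A) (hlat : LangLattice 𝒟) (hqc : QuotientClosed 𝒟)
    (hreg : ∀ L ∈ 𝒟, RegularLang L)
    (hcat : ∀ K L : Lang A, K ∈ 𝒟 → L ∈ 𝒟 → cat K L ∈ 𝒟)
    (α : List A → M) (hα : IsMonoidMorphism α)
    (ρ : Lang A → R) (hρ : IsRatingMap ρ) (γ : R → R) (hγ : IsQuasiMult ρ γ) :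
    (muMap γ (∅ : Set (M × R)) = ∅ ∧
      ∀ T U : Set (M × R), muMap γ (T ∪ U) = muMap γ T ∪ muMap γ U) ∧
    (∀ T U V : Set (M × R),
      muMap γ (pmul T (pmul (muMap γ U) V)) = muMap γ (pmul T (pmul U V))) ∧
    (∀ K₁ K₂ : Lang A,
      tauDp 𝒟 α ρ (cat K₁ K₂) =
        muMap γ (pmul (tauDp 𝒟 α ρ K₁) (tauDp 𝒟 α ρ K₂))) := by
  obtain ⟨hγe, hγq, hγm⟩ := hγ
  refine ⟨⟨?_, ?_⟩, ?_, ?_⟩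
  · ext p; simp [muMap]
  · intro T U
    ext p
    constructor
    · rintro ⟨q, h | h, h'⟩
      · exact Or.inl ⟨q, h, h'⟩
      · exact Or.inr ⟨q, h, h'⟩
    · rintro (⟨q, h, h'⟩ | ⟨q, h, h'⟩)
      · exact ⟨q, Or.inl h, h'⟩
      · exact ⟨q, Or.inr h, h'⟩
  · intro T U V
    ext ⟨m, r⟩
    constructor
    · rintro ⟨q, ⟨⟨t1, t2⟩, ht, _, ⟨⟨u1, u2⟩, ⟨u', hu, hle⟩, ⟨v1, v2⟩, hv, rfl⟩, he⟩, hr⟩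
      simp only [Prod.mk.injEq] at he hu hle hr
      obtain ⟨rfl, rfl⟩ := he
      refine ⟨t2 * (u' * v2), ⟨(t1, t2), ht, _, ⟨(u1, u'), hu, (v1, v2), hv, rfl⟩, rfl⟩, ?_⟩
      refine rle_tr hr ?_
      rw [← mul_assoc, ← mul_assoc, ← hγq t2 u' v2]
      exact rle_endo hγe (rle_mul (rle_mul (hidem _) hle) (hidem _))
    · rintro ⟨q, ⟨⟨t1, t2⟩, ht, _, ⟨⟨u1, u2⟩, hu, ⟨v1, v2⟩, hv, rfl⟩, he⟩, hr⟩
      simp only [Prod.mk.injEq] at he hr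
      obtain ⟨rfl, rfl⟩ := he
      refine ⟨t2 * (γ u2 * v2), ⟨(t1, t2), ht, _,
        ⟨(u1, γ u2), ⟨u2, hu, hidem _⟩, (v1, v2), hv, rfl⟩, rfl⟩, ?_⟩
      refine rle_tr hr ?_
      rw [← mul_assoc, ← mul_assoc, hγq t2 u2 v2]
      exact hidem _
  · intro K₁ K₂
    ext ⟨s, r⟩
    constructor
    · intro h
      choose C1 hC1 hC1' using fun t : M => exists_opt hlat hρ (α ⁻¹' {t} ∩ K₁)
      choose C2 hC2 hC2' using fun t : M => exists_opt hlat hρ (α ⁻¹' {t} ∩ K₂)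
      obtain ⟨_, hX, hle⟩ := h
        (⋃ p : {p : M × M // p.1 * p.2 = s}, Set.image2 cat (C1 p.1.1) (C2 p.1.2)) (by
        refine ⟨⟨Set.finite_iUnion fun p => (hC1 _).1.1.image2 _ (hC2 _).1.1, ?_⟩, ?_⟩
        · rintro _ ⟨hs, u, hu, v, hv, rfl⟩
          have hs' : α u * α v = s := by rw [← hα.2]; exact hs
          obtain ⟨H, hH, huH⟩ := (hC1 (α u)).1.2 ⟨rfl, hu⟩
          obtain ⟨H', hH', hvH⟩ := (hC2 (α v)).1.2 ⟨rfl, hv⟩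
          exact ⟨cat H H', Set.mem_iUnion.2 ⟨⟨(α u, α v), hs'⟩, H, hH, H', hH', rfl⟩,
            u, huH, v, hvH, rfl⟩
        · intro X hX
          obtain ⟨p, H, hH, H', hH', rfl⟩ := Set.mem_iUnion.1 hX
          exact hcat _ _ ((hC1 _).2 hH) ((hC2 _).2 hH'))
      obtain ⟨⟨⟨s1, s2⟩, hs⟩, H, hH, H', hH', rfl⟩ := Set.mem_iUnion.1 hX
      refine ⟨ρ H * ρ H', ⟨(s1, ρ H), hC1' s1 ⟨H, hH, hidem _⟩,
        (s2, ρ H'), hC2' s2 ⟨H', hH', hidem _⟩, ?_⟩, ?_⟩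
      · simpa using hs
      · rw [← hγm]; exact hle
    · rintro ⟨q, ⟨⟨s1, r1⟩, h1, ⟨s2, r2⟩, h2, he⟩, hr⟩ Ks ⟨⟨hf, hc⟩, hD⟩
      simp only [Prod.mk.injEq] at he hr
      obtain ⟨rfl, rfl⟩ := he
      obtain ⟨_, ⟨K, hK, Q, ⟨hQ, hQr⟩, rfl⟩, hle⟩ := h1
        {X | ∃ K ∈ Ks, ∃ Q ∈ {Q | Q ∈ (Set.range fun w : List A => {u : List A | w ++ u ∈ K}) ∧
          rle r2 (ρ Q)}, resid K Q = X} (by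
        refine ⟨⟨?_, ?_⟩, ?_⟩
        · have : (⋃ K ∈ Ks, resid K '' (Set.range fun w : List A =>
              {u : List A | w ++ u ∈ K})).Finite :=
            hf.biUnion fun K hK => (finite_lq (hreg K (hD hK))).image _
          refine this.subset ?_
          rintro _ ⟨K, hK, Q, ⟨hQ, -⟩, rfl⟩
          exact Set.mem_biUnion hK ⟨Q, hQ, rfl⟩
        · rintro u ⟨hu1, hu⟩
          obtain ⟨_, ⟨K, hK, rfl⟩, hle⟩ := h2 ((fun K => {v : List A | u ++ v ∈ K}) '' Ks) (by
            refine ⟨⟨hf.image _, ?_⟩, ?_⟩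
            · rintro v ⟨hv1, hv⟩
              obtain ⟨K, hK, hm⟩ := @hc (u ++ v) ⟨by
                have e1 : α u = s1 := hu1
                have e2 : α v = s2 := hv1
                change α (u ++ v) = s1 * s2
                rw [hα.2, e1, e2], u, hu, v, hv, rfl⟩
              exact ⟨_, ⟨K, hK, rfl⟩, hm⟩
            · rintro _ ⟨K, hK, rfl⟩
              exact (hqc K (hD hK) u).1)
          exact ⟨_, ⟨K, hK, _, ⟨⟨u, rfl⟩, hle⟩, rfl⟩, mem_resid.2 fun v hv => hv⟩
        · rintro _ ⟨K, hK, Q, -, rfl⟩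
          refine sInter_memD hlat ((finite_rq (hreg K (hD hK))).subset
            (Set.image_subset_range _ _)) ?_
          rintro _ ⟨v, -, rfl⟩
          exact (hqc K (hD hK) v).2)
      refine ⟨K, hK, rle_tr hr (rle_tr (rle_endo hγe (rle_mul hle hQr)) ?_)⟩
      rw [← hγm]
      apply rle_mono hρ
      rintro _ ⟨u, hu, v, hv, rfl⟩
      exact mem_resid.1 hu v hv

end Paper
end
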